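/- For every K > 0 there exists a constant C > 0 such that for every r₁ ∈ (0, K], ∫_{G \ B_{r₁}} G_{r₁}(x) dρ(x) ≤ C / r₁, where G_{r₁}(x) = sup_{z ∈ B(x, r₁/2)} sup_{t>0} ‖∇p_t(z)‖, ∇p_t = (X₀p_t, X₁p_t, X₂p_t), and ‖·‖ denotes the Euclidean norm of this vector. -/

import Mathlib

open MeasureTheory Real Filter Set
open scoped ENNReal

noncomputable section

/-- The group `G = ℝ² ⋊ ℝ⁺`, realized as triples `(x₁, x₂, a)` (only `a > 0` is relevant). -/
abbrev G : Type := ℝ × ℝ × ℝ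

/-- Group product `(x₁,x₂,a)·(x₁',x₂',a') = (x₁+a x₁', x₂+a x₂', a a')`. -/
def gMul (x y : G) : G := (x.1 + x.2.2 * y.1, x.2.1 + x.2.2 * y.2.1, x.2.2 * y.2.2)

/-- Group inverse `(x₁,x₂,a)⁻¹ = (−x₁/a, −x₂/a, 1/a)`. -/
def gInv (x : G) : G := (-x.1 / x.2.2, -x.2.1 / x.2.2, 1 / x.2.2)

/-- The identity `e = (0,0,1)`. -/
def gE : G := (0, 0, 1)

/-- The right Haar measure `dρ = a⁻¹ dx₁ dx₂ da` (supported where `a > 0`). -/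
def ρG : Measure G :=
  (volume : Measure G).withDensity fun x => ENNReal.ofReal (if 0 < x.2.2 then x.2.2⁻¹ else 0)

/-- The modular function `δ(x₁,x₂,a) = a⁻²`. -/
def deltaG (x : G) : ℝ := (x.2.2 ^ 2)⁻¹

/-- `|x| = √(x₁² + x₂²)`. -/
def normG (x : G) : ℝ := Real.sqrt (x.1 ^ 2 + x.2.1 ^ 2)

/-- `cosh r(x) = (a + a⁻¹ + a⁻¹|x|²)/2`. -/
def coshArg (x : G) : ℝ := (x.2.2 + x.2.2⁻¹ + x.2.2⁻¹ * (x.1 ^ 2 + x.2.1 ^ 2)) / 2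

/-- `r(x) ≥ 0` is determined by `cosh r(x) = coshArg x`; explicitly `r = arcosh (coshArg x)`. -/
def rG (x : G) : ℝ := Real.log (coshArg x + Real.sqrt (coshArg x ^ 2 - 1))

/-- The left-invariant distance `d(x,y) = r(x⁻¹y)`. -/
def dG (x y : G) : ℝ := rG (gMul (gInv x) y)

/-- The heat kernel
`p_t(x) = (8π^{3/2})⁻¹ δ(x)^{1/2} (r(x)/sinh r(x)) t^{−3/2} exp(−r(x)²/(4t))`,
with `r/sinh r := 1` at `x = e`. -/
def heatK (t : ℝ) (x : G) : ℝ :=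
  (8 * Real.pi ^ ((3 : ℝ)/2))⁻¹ * Real.sqrt (deltaG x) *
    (if rG x = 0 then 1 else rG x / Real.sinh (rG x)) *
    t ^ (-(3 : ℝ)/2) * Real.exp (-(rG x ^ 2) / (4 * t))

/-- Convolution `f ∗ p_t(x) = ∫ f(xy⁻¹) p_t(y) dρ(y)`. -/
def convHeat (f : G → ℝ) (t : ℝ) (x : G) : ℝ := ∫ y, f (gMul x (gInv y)) * heatK t y ∂ρG

/-- The heat maximal operator `Mf(x) = sup_{t>0} |f ∗ p_t(x)|` (valued in `ℝ≥0∞`). -/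
def maxHeat (f : G → ℝ) (x : G) : ℝ≥0∞ :=
  ⨆ (t : ℝ) (_ : 0 < t), ENNReal.ofReal |convHeat f t x|

/-- Calderón–Zygmund sets. -/
def IsCZ (R : Set G) : Prop :=
  ∃ c : G, ∃ L r : ℝ, 0 < c.2.2 ∧ 0 < L ∧ 0 < r ∧
    R = Set.Icc (c.1 - L/2) (c.1 + L/2) ×ˢ
        (Set.Icc (c.2.1 - L/2) (c.2.1 + L/2) ×ˢ
         Set.Icc (c.2.2 * Real.exp (-r)) (c.2.2 * Real.exp r)) ∧
    (r < 1 → Real.exp 2 * c.2.2 * r ≤ L ∧ L < Real.exp 8 * c.2.2 * r) ∧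
    (1 ≤ r → c.2.2 * Real.exp (2*r) ≤ L ∧ L < c.2.2 * Real.exp (8*r))

/-- Atoms: `A ∈ L¹(ρ)` supported in a Calderón–Zygmund set `R`, with
`‖A‖_∞ ≤ ρ(R)⁻¹` and `∫ A dρ = 0`. -/
def IsAtomG (A : G → ℝ) : Prop :=
  Integrable A ρG ∧
  ∃ R : Set G, IsCZ R ∧ (∀ x ∉ R, A x = 0) ∧
    eLpNorm A ⊤ ρG ≤ (ρG R)⁻¹ ∧
    ∫ x, A x ∂ρG = 0

/-- `f = Σ_j lam_j A_j` with atoms `A_j`, `Σ_j |lam_j| < ∞`, converging in `L¹(ρ)`. -/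
def IsH1Decomp (f : G → ℝ) (lam : ℕ → ℝ) (A : ℕ → G → ℝ) : Prop :=
  (∀ j, IsAtomG (A j)) ∧ Summable (fun j => |lam j|) ∧
  Tendsto (fun N => eLpNorm (fun x => f x - ∑ j ∈ Finset.range N, lam j * A j x) 1 ρG)
    atTop (nhds 0)

/-- The Hardy space `H¹`. -/
def MemH1 (f : G → ℝ) : Prop :=
  Integrable f ρG ∧ ∃ lam A, IsH1Decomp f lam A

/-- `‖f‖_{H¹} = inf Σ_j |lam_j|` over all atomic decompositions. -/
def H1norm (f : G → ℝ) : ℝ :=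
  sInf {s | ∃ lam A, IsH1Decomp f lam A ∧ s = ∑' j, |lam j|}

/-- The left-invariant vector field `X₀ = a ∂_a`. -/
def X0 (f : G → ℝ) (x : G) : ℝ := x.2.2 * deriv (fun s => f (x.1, x.2.1, s)) x.2.2

/-- The left-invariant vector field `X₁ = a ∂_{x₁}`. -/
def X1 (f : G → ℝ) (x : G) : ℝ := x.2.2 * deriv (fun s => f (s, x.2.1, x.2.2)) x.1

/-- The left-invariant vector field `X₂ = a ∂_{x₂}`. -/
def X2 (f : G → ℝ) (x : G) : ℝ := x.2.2 * deriv (fun s => f (x.1, s, x.2.2)) x.2.1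

/-- `‖∇p_t(x)‖`, the Euclidean norm of `(X₀p_t, X₁p_t, X₂p_t)` at `x`. -/
def gradHeatNorm (t : ℝ) (x : G) : ℝ :=
  Real.sqrt (X0 (heatK t) x ^ 2 + X1 (heatK t) x ^ 2 + X2 (heatK t) x ^ 2)

/-- The Poisson kernel `q_t(x) = π⁻² δ(x)^{1/2} (r(x)/sinh r(x)) · t/(t²+r(x)²)²`. -/
def poissonK (t : ℝ) (x : G) : ℝ :=
  (Real.pi ^ 2)⁻¹ * Real.sqrt (deltaG x) *
    (if rG x = 0 then 1 else rG x / Real.sinh (rG x)) *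
    (t / (t ^ 2 + rG x ^ 2) ^ 2)

/-- Convolution `f ∗ q_t(x) = ∫ f(xy⁻¹) q_t(y) dρ(y)`. -/
def convPoisson (f : G → ℝ) (t : ℝ) (x : G) : ℝ := ∫ y, f (gMul x (gInv y)) * poissonK t y ∂ρG

/-- The Poisson maximal operator `M̃f(x) = sup_{t>0} |f ∗ q_t(x)|`. -/
def maxPoisson (f : G → ℝ) (x : G) : ℝ≥0∞ :=
  ⨆ (t : ℝ) (_ : 0 < t), ENNReal.ofReal |convPoisson f t x|

/-- `G_{r₁}(x) = sup_{z ∈ B(x,r₁/2)} sup_{t>0} ‖∇p_t(z)‖`. -/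
def Gsup (r1 : ℝ) (x : G) : ℝ≥0∞ :=
  ⨆ (z : G) (_ : 0 < z.2.2 ∧ dG x z < r1 / 2) (t : ℝ) (_ : 0 < t),
    ENNReal.ofReal (gradHeatNorm t z)

/-- `R₀ = [−1,1]×[−1,1]×[e⁻¹,e]`. -/
def R0set : Set G :=
  Set.Icc (-1 : ℝ) 1 ×ˢ (Set.Icc (-1 : ℝ) 1 ×ˢ Set.Icc (Real.exp (-1)) (Real.exp 1))

/-- `R_L = [L−1,L+1]×[−1,1]×[e⁻¹,e]`. -/
def RLset (L : ℝ) : Set G :=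
  Set.Icc (L - 1) (L + 1) ×ˢ (Set.Icc (-1 : ℝ) 1 ×ˢ Set.Icc (Real.exp (-1)) (Real.exp 1))

/-- `f_L = χ_{R_L} − χ_{R₀}`. -/
def fL (L : ℝ) : G → ℝ := fun x =>
  (RLset L).indicator (fun _ => (1 : ℝ)) x - R0set.indicator (fun _ => (1 : ℝ)) x

/-- The mean of `g` over `R` with respect to `ρ`. -/
def czMean (g : G → ℝ) (R : Set G) : ℝ := (∫ x in R, g x ∂ρG) / (ρG R).toReal

/-- `‖g‖_{BMO} = sup_R ρ(R)⁻¹ ∫_R |g − g_R| dρ` over Calderón–Zygmund sets `R`. -/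
def czBMO (g : G → ℝ) : ℝ≥0∞ :=
  ⨆ (R : Set G) (_ : IsCZ R),
    (ρG R)⁻¹ * ∫⁻ x in R, ENNReal.ofReal |g x - czMean g R| ∂ρG

/-- `‖h‖_{BMO(ℝ)} = sup_Q |Q|⁻¹ ∫_Q |h − h_Q|` over bounded intervals `Q ⊂ ℝ`. -/
def lineBMO (h : ℝ → ℝ) : ℝ≥0∞ :=
  ⨆ (a : ℝ) (b : ℝ) (_ : a < b),
    (ENNReal.ofReal (b - a))⁻¹ *
      ∫⁻ s in Set.Icc a b, ENNReal.ofReal |h s - (∫ u in Set.Icc a b, h u) / (b - a)|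

/-- `2R₀ = [−2,2]×[−2,2]×[e⁻²,e²]`. -/
def twoR0set : Set G :=
  Set.Icc (-2 : ℝ) 2 ×ˢ (Set.Icc (-2 : ℝ) 2 ×ˢ Set.Icc (Real.exp (-2)) (Real.exp 2))

/-- The set `{x₁ > 3, |x₂| < 1, e⁻¹ < a < e}`. -/
def domSpecial : Set G :=
  {x : G | 3 < x.1 ∧ |x.2.1| < 1 ∧ Real.exp (-1) < x.2.2 ∧ x.2.2 < Real.exp 1}

/-- The function equal to `1/(x₁ (log x₁)^{3/2})` on `{x₁ > 3, |x₂| < 1, e⁻¹ < a < e}`,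
to `c₀` on `R₀`, and `0` elsewhere. -/
def fSpecial (c0 : ℝ) : G → ℝ := fun x =>
  domSpecial.indicator (fun y => (y.1 * Real.log y.1 ^ ((3 : ℝ)/2))⁻¹) x
    + R0set.indicator (fun _ => c0) x

/-!
With `r = rG x` and `a` the height of `x`, the heat kernel is `p_t = c a⁻¹ φ_t(r)`, and
`∇r = (a - cosh r, x₁, x₂) / sinh r` is a unit vector field. Hence
`∇p_t = p_t (-e₀ - coth r ∇r + (1/r - r/(2t)) ∇r)`, where `e₀ + coth r ∇r` has the small norm
`√(a² + |x|²) / sinh r ≤ √(2 a cosh r) / sinh r`. Maximizing the Gaussian factors over `t` gives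
`‖∇p_t‖ ≲ a⁻¹ (sinh r)⁻¹ (√(2 a cosh r) / (r² sinh r) + 2 / r³)`, uniformly in `t`.
Outside the ball of radius `r₁` this bound changes at most by a factor `O(exp (2 r₁))` on balls
of radius `r₁ / 2`. In the coordinates `(u, r)`, `u = log a`, the measure `ρ` becomes
`2π e^u sinh r du dr` on `|u| < r`; integrating the bound in `u` leaves `O(r⁻²) dr`, whose integral
over `[r₁, ∞)` is `O(1 / r₁)`.
-/

/-! ### Real-variable inequalities -/

lemma rpow_le_rpow_self_mul_exp {α x : ℝ} (hα : 0 < α) (hx : 0 ≤ x) : x ^ α ≤ α ^ α * exp x :=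
  calc x ^ α = α ^ α * (x / α) ^ α := by rw [div_rpow hx hα.le]; field_simp
    _ ≤ α ^ α * exp (x / α) ^ α := by
        have : x / α ≤ exp (x / α) := by linarith [add_one_le_exp (x / α)]
        gcongr
    _ = α ^ α * exp x := by rw [← exp_mul, div_mul_cancel₀ x hα.ne']

lemma rpow_neg_mul_exp_neg_sq_div_le {n : ℕ} (hn : n ≠ 0) {t r : ℝ} (ht : 0 < t) (hr : 0 < r) :
    t ^ (-(n : ℝ) / 2) * exp (-(r ^ 2) / (4 * t)) ≤ (√(2 * n) / r) ^ n := by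
  have hα : (0 : ℝ) < n / 2 := by positivity
  have hsq : n / 2 / (r ^ 2 / (4 * t)) = (√(2 * n) / r) ^ 2 * t := by
    rw [div_pow, sq_sqrt (by positivity)]; field_simp; ring
  calc t ^ (-(n : ℝ) / 2) * exp (-(r ^ 2) / (4 * t))
      = t ^ (-(n : ℝ) / 2) * ((r ^ 2 / (4 * t)) ^ ((n : ℝ) / 2))⁻¹ *
          ((r ^ 2 / (4 * t)) ^ ((n : ℝ) / 2) * (exp (r ^ 2 / (4 * t)))⁻¹) := by
        rw [neg_div _ (r ^ 2), exp_neg]; field_simp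
    _ ≤ t ^ (-(n : ℝ) / 2) * ((r ^ 2 / (4 * t)) ^ ((n : ℝ) / 2))⁻¹ * (n / 2) ^ ((n : ℝ) / 2) := by
        gcongr
        rw [← div_eq_mul_inv, div_le_iff₀ (exp_pos _)]
        exact rpow_le_rpow_self_mul_exp hα (by positivity)
    _ = t ^ (-(n : ℝ) / 2) * ((√(2 * n) / r) ^ 2 * t) ^ ((n : ℝ) / 2) := by
        rw [← hsq, div_rpow hα.le (by positivity)]; ring
    _ = (√(2 * n) / r) ^ n := by
        rw [mul_rpow (by positivity) ht.le, mul_left_comm, ← rpow_add ht, ← rpow_natCast_mul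
          (by positivity)]
        simp [neg_div, mul_div_cancel₀]

lemma rpow_neg_three_half_mul_exp_neg_sq_div_le {t r : ℝ} (ht : 0 < t) (hr : 0 < r) :
    t ^ (-(3 : ℝ) / 2) * exp (-(r ^ 2) / (4 * t)) ≤ 16 / r ^ 3 := by
  have hsqrt : √(2 * (3 : ℕ)) ≤ 5 / 2 := by rw [sqrt_le_iff]; norm_num
  calc t ^ (-(3 : ℝ) / 2) * exp (-(r ^ 2) / (4 * t)) ≤ (√(2 * (3 : ℕ)) / r) ^ 3 :=
        rpow_neg_mul_exp_neg_sq_div_le three_ne_zero ht hr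
    _ ≤ (5 / 2 / r) ^ 3 := by gcongr
    _ = (5 / 2) ^ 3 / r ^ 3 := div_pow _ _ _
    _ ≤ 16 / r ^ 3 := by gcongr; norm_num

lemma rpow_neg_five_half_mul_exp_neg_sq_div_le {t r : ℝ} (ht : 0 < t) (hr : 0 < r) :
    t ^ (-(5 : ℝ) / 2) * exp (-(r ^ 2) / (4 * t)) ≤ 336 / r ^ 5 := by
  have hsqrt : √(2 * (5 : ℕ)) ≤ 16 / 5 := by rw [sqrt_le_iff]; norm_num
  calc t ^ (-(5 : ℝ) / 2) * exp (-(r ^ 2) / (4 * t)) ≤ (√(2 * (5 : ℕ)) / r) ^ 5 :=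
        rpow_neg_mul_exp_neg_sq_div_le (by norm_num) ht hr
    _ ≤ (16 / 5 / r) ^ 5 := by gcongr
    _ = (16 / 5) ^ 5 / r ^ 5 := div_pow _ _ _
    _ ≤ 336 / r ^ 5 := by gcongr; norm_num

lemma cosh_add_le_exp_mul_cosh (r : ℝ) {h : ℝ} (hh : 0 ≤ h) :
    cosh (r + h) ≤ exp h * cosh r := by
  rw [cosh_add, ← cosh_add_sinh h]
  nlinarith [mul_le_mul_of_nonneg_right (sinh_lt_cosh r).le (sinh_nonneg_iff.2 hh)]

lemma sinh_add_le_two_mul_exp_mul_sinh {r h : ℝ} (hh : 0 ≤ h) (hr : h ≤ r) :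
    sinh (r + h) ≤ 2 * exp h * sinh r := by
  have hsub : 0 ≤ sinh (r - h) := sinh_nonneg_iff.2 (sub_nonneg.2 hr)
  have hsr : 0 ≤ sinh r := sinh_nonneg_iff.2 (hh.trans hr)
  have hexp : cosh h ≤ exp h := by linarith [cosh_add_sinh h, sinh_nonneg_iff.2 hh]
  rw [sinh_sub] at hsub
  rw [sinh_add]
  nlinarith [mul_le_mul_of_nonneg_left hexp hsr]

lemma sqrt_two_mul_cosh_mul_sinh_half_le {r : ℝ} (hr : 0 ≤ r) :
    √(2 * cosh r) * sinh (r / 2) ≤ sinh r := by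
  have hcosh : cosh r = 2 * cosh (r / 2) ^ 2 - 1 := by
    rw [← mul_div_cancel₀ r two_ne_zero, cosh_two_mul, sinh_sq]; ring_nf
  have hsinh : sinh r = 2 * cosh (r / 2) * sinh (r / 2) := by
    rw [← mul_div_cancel₀ r two_ne_zero, sinh_two_mul]; ring_nf
  have hsqrt : √(2 * cosh r) ≤ 2 * cosh (r / 2) :=
    sqrt_le_iff.2 ⟨by positivity, by rw [hcosh]; linarith⟩
  rw [hsinh]
  exact mul_le_mul_of_nonneg_right hsqrt (sinh_nonneg_iff.2 (by positivity))

lemma integral_exp_half (r : ℝ) : ∫ u in (-r)..r, exp (u / 2) = 4 * sinh (r / 2) := by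
  rw [intervalIntegral.integral_comp_div exp two_ne_zero, integral_exp, sinh_eq,
    neg_div, smul_eq_mul]
  ring

/-! ### Lebesgue integrals -/

lemma lintegral_comp_exp (f : ℝ → ℝ≥0∞) :
    ∫⁻ u, f (exp u) = ∫⁻ a in Ioi 0, ENNReal.ofReal a⁻¹ * f a := by
  have h := lintegral_image_eq_lintegral_abs_deriv_mul MeasurableSet.univ
    (fun x _ ↦ (Real.hasDerivAt_exp x).hasDerivWithinAt) exp_injective.injOn
    (fun a ↦ ENNReal.ofReal a⁻¹ * f a)
  rw [image_univ, range_exp, Measure.restrict_univ] at h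
  rw [h]
  refine lintegral_congr fun u ↦ ?_
  rw [abs_exp, ← mul_assoc, ← ENNReal.ofReal_mul (exp_pos u).le,
    mul_inv_cancel₀ (exp_ne_zero u), ENNReal.ofReal_one, one_mul]

lemma lintegral_comp_sqrt_sq_add_sq {g : ℝ → ℝ≥0∞} (hg : Measurable g) :
    ∫⁻ p : ℝ × ℝ, g √(p.1 ^ 2 + p.2 ^ 2) =
      ENNReal.ofReal (2 * π) * ∫⁻ s in Ioi (0 : ℝ), ENNReal.ofReal s * g s := by
  have hpolar : ∀ p ∈ polarCoord.target,
      √((polarCoord.symm p).1 ^ 2 + (polarCoord.symm p).2 ^ 2) = p.1 := fun p hp ↦ by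
    rw [polarCoord_target] at hp
    rw [polarCoord_symm_apply, mul_pow, mul_pow, ← mul_add, cos_sq_add_sin_sq, mul_one,
      sqrt_sq (le_of_lt hp.1)]
  rw [← lintegral_comp_polarCoord_symm,
    setLIntegral_congr_fun polarCoord.open_target.measurableSet
      fun p hp ↦ by rw [hpolar p hp, smul_eq_mul],
    polarCoord_target, Measure.volume_eq_prod, ← Measure.prod_restrict,
    lintegral_prod _ (by fun_prop)]
  simp only [lintegral_const, Measure.restrict_apply_univ, volume_Ioo]
  rw [lintegral_mul_const _ (by fun_prop), mul_comm, sub_neg_eq_add, two_mul]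

lemma lintegral_Ici_inv_sq {c : ℝ} (hc : 0 < c) :
    ∫⁻ r in Ici c, ENNReal.ofReal (r ^ 2)⁻¹ = ENNReal.ofReal c⁻¹ := by
  have hrpow : ∀ r ∈ Ioi c, r ^ (-2 : ℝ) = (r ^ 2)⁻¹ := fun r hr ↦ by
    rw [rpow_neg (hc.trans hr).le, rpow_two]
  have hint : IntegrableOn (fun r : ℝ ↦ (r ^ 2)⁻¹) (Ioi c) :=
    (integrableOn_Ioi_rpow_of_lt (by norm_num) hc).congr_fun hrpow measurableSet_Ioi
  rw [setLIntegral_congr Ioi_ae_eq_Ici.symm,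
    ← ofReal_integral_eq_lintegral_ofReal hint (ae_of_all _ fun r ↦ by positivity),
    ← setIntegral_congr_fun measurableSet_Ioi hrpow, integral_Ioi_rpow_of_lt (by norm_num) hc]
  norm_num [rpow_neg_one]

lemma lintegral_setLIntegral_Ioi_abs_swap {F : ℝ → ℝ → ℝ≥0∞}
    (hF : Measurable (Function.uncurry F)) :
    ∫⁻ u, ∫⁻ r in Ioi |u|, F u r = ∫⁻ r in Ioi 0, ∫⁻ u in Ioo (-r) r, F u r := by
  have hset : MeasurableSet {p : ℝ × ℝ | |p.1| < p.2} :=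
    measurableSet_lt (by fun_prop) (by fun_prop)
  have hr (u : ℝ) : ∫⁻ r in Ioi |u|, F u r =
      ∫⁻ r, {p : ℝ × ℝ | |p.1| < p.2}.indicator (Function.uncurry F) (u, r) :=
    (lintegral_indicator measurableSet_Ioi _).symm
  have hu (r : ℝ) : ∫⁻ u, {p : ℝ × ℝ | |p.1| < p.2}.indicator (Function.uncurry F) (u, r) =
      (Ioi 0).indicator (fun r ↦ ∫⁻ u in Ioo (-r) r, F u r) r := by
    have hslice : (fun u ↦ {p : ℝ × ℝ | |p.1| < p.2}.indicator (Function.uncurry F) (u, r)) =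
        (Ioo (-r) r).indicator (F · r) := by
      ext u
      simp only [indicator_apply, mem_ofPred_eq, mem_Ioo, abs_lt, Function.uncurry_apply_pair]
    rw [hslice, lintegral_indicator measurableSet_Ioo]
    rcases lt_or_ge 0 r with hr | hr
    · rw [indicator_of_mem (mem_Ioi.2 hr)]
    · rw [indicator_of_notMem (notMem_Ioi.2 hr), Ioo_eq_empty (by linarith), setLIntegral_empty]
  rw [lintegral_congr hr, lintegral_lintegral_swap
    (f := fun u r ↦ {p : ℝ × ℝ | |p.1| < p.2}.indicator (Function.uncurry F) (u, r))
    (hF.indicator hset).aemeasurable, ← lintegral_indicator measurableSet_Ioi]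
  exact lintegral_congr hu

/-! ### The distance to the identity -/

lemma one_le_coshArg {x : G} (hx : 0 < x.2.2) : 1 ≤ coshArg x := by
  have h : 2 * x.2.2 * (coshArg x - 1) = (x.2.2 - 1) ^ 2 + x.1 ^ 2 + x.2.1 ^ 2 := by
    unfold coshArg; field_simp; ring
  have : 0 ≤ 2 * x.2.2 * (coshArg x - 1) := h ▸ by positivity
  exact sub_nonneg.1 (nonneg_of_mul_nonneg_right this (by positivity))

lemma cosh_rG {x : G} (hx : 0 < x.2.2) : cosh (rG x) = coshArg x :=
  cosh_arcosh (one_le_coshArg hx)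

lemma rG_nonneg {x : G} (hx : 0 < x.2.2) : 0 ≤ rG x := arcosh_nonneg (one_le_coshArg hx)

lemma two_mul_mul_cosh_rG {x : G} (hx : 0 < x.2.2) :
    2 * x.2.2 * cosh (rG x) = x.2.2 ^ 2 + 1 + x.1 ^ 2 + x.2.1 ^ 2 := by
  rw [cosh_rG hx, coshArg]; field_simp; ring

-- `(x₁, x₂, a - cosh r)` is `sinh r` times the gradient of `r`, a unit vector field.
lemma sinh_rG_sq {x : G} (hx : 0 < x.2.2) :
    sinh (rG x) ^ 2 = (x.2.2 - cosh (rG x)) ^ 2 + x.1 ^ 2 + x.2.1 ^ 2 := by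
  linear_combination sinh_sq (rG x) + two_mul_mul_cosh_rG hx

lemma measurable_rG : Measurable rG := by
  have : Measurable coshArg := by unfold coshArg; fun_prop
  unfold rG; fun_prop

lemma abs_log_le_rG {x : G} (hx : 0 < x.2.2) : |log x.2.2| ≤ rG x := by
  rw [← abs_of_nonneg (rG_nonneg hx), ← cosh_le_cosh, cosh_log hx, cosh_rG hx, coshArg]
  have : 0 ≤ x.2.2⁻¹ * (x.1 ^ 2 + x.2.1 ^ 2) := by positivity
  linarith

lemma gMul_pos {x y : G} (hx : 0 < x.2.2) (hy : 0 < y.2.2) : 0 < (gMul x y).2.2 := mul_pos hx hy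

lemma gInv_pos {x : G} (hx : 0 < x.2.2) : 0 < (gInv x).2.2 := one_div_pos.2 hx

lemma gMul_gInv_cancel_left {x : G} (hx : 0 < x.2.2) (z : G) : gMul x (gMul (gInv x) z) = z := by
  ext <;> simp only [gMul, gInv] <;> field_simp <;> ring

lemma dG_comm {x z : G} (hx : 0 < x.2.2) (hz : 0 < z.2.2) : dG x z = dG z x := by
  have : coshArg (gMul (gInv x) z) = coshArg (gMul (gInv z) x) := by
    simp only [coshArg, gMul, gInv]; field_simp; ring
  rw [dG, dG, rG, rG, this]

lemma dG_nonneg {x z : G} (hx : 0 < x.2.2) (hz : 0 < z.2.2) : 0 ≤ dG x z :=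
  rG_nonneg (gMul_pos (gInv_pos hx) hz)

lemma rG_gMul_le {x y : G} (hx : 0 < x.2.2) (hy : 0 < y.2.2) : rG (gMul x y) ≤ rG x + rG y := by
  have hxy := gMul_pos hx hy
  have hsx : 0 ≤ sinh (rG x) := sinh_nonneg_iff.2 (rG_nonneg hx)
  have hsy : 0 ≤ sinh (rG y) := sinh_nonneg_iff.2 (rG_nonneg hy)
  set u := x.2.2 - cosh (rG x) with hu
  set v := y.2.2⁻¹ - cosh (rG y) with hv
  set p := y.2.2⁻¹ * y.1 with hp
  set q := y.2.2⁻¹ * y.2.1 with hq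
  have hnorm_x : sinh (rG x) ^ 2 = u ^ 2 + x.1 ^ 2 + x.2.1 ^ 2 := sinh_rG_sq hx
  have hnorm_y : sinh (rG y) ^ 2 = v ^ 2 + p ^ 2 + q ^ 2 := by
    rw [hv, hp, hq, sinh_sq, cosh_rG hy, coshArg]; field_simp; ring
  have hcosh : cosh (rG (gMul x y)) =
      cosh (rG x) * cosh (rG y) + (-(u * v) + x.1 * p + x.2.1 * q) := by
    rw [hu, hv, cosh_rG hx, cosh_rG hy, cosh_rG hxy]
    simp only [coshArg, gMul, hp, hq]; field_simp; ring
  -- Cauchy-Schwarz for `(-u, x₁, x₂)` and `(v, p, q)`, via Lagrange's identity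
  have hCS : -(u * v) + x.1 * p + x.2.1 * q ≤ sinh (rG x) * sinh (rG y) := by
    refine (abs_le_of_sq_le_sq' ?_ (mul_nonneg hsx hsy)).2
    rw [mul_pow, hnorm_x, hnorm_y]
    linarith [sq_nonneg (u * p + x.1 * v), sq_nonneg (u * q + x.2.1 * v),
      sq_nonneg (x.1 * q - x.2.1 * p)]
  rw [← abs_of_nonneg (rG_nonneg hxy),
    ← abs_of_nonneg (add_nonneg (rG_nonneg hx) (rG_nonneg hy)), ← cosh_le_cosh, cosh_add, hcosh]
  gcongr

lemma rG_le_rG_add_dG {x z : G} (hx : 0 < x.2.2) (hz : 0 < z.2.2) : rG z ≤ rG x + dG x z := by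
  have := rG_gMul_le hx (gMul_pos (gInv_pos hx) hz)
  rwa [gMul_gInv_cancel_left hx] at this

lemma height_le_exp_dG_mul_height {x z : G} (hx : 0 < x.2.2) (hz : 0 < z.2.2) :
    z.2.2 ≤ exp (dG x z) * x.2.2 := by
  have hpos := gMul_pos (gInv_pos hx) hz
  have hlog : log (gMul (gInv x) z).2.2 ≤ dG x z := (le_abs_self _).trans (abs_log_le_rG hpos)
  have hheight : (gMul (gInv x) z).2.2 = z.2.2 / x.2.2 := by simp only [gMul, gInv]; ring
  rwa [hheight, log_le_iff_le_exp (div_pos hz hx), div_le_iff₀ hx] at hlog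

/-! ### The gradient of the heat kernel -/

/-- The radial factor `(r / sinh r) t^(-3/2) exp(-r² / (4t))` of the heat kernel: away from the
identity, `heatK t x` is `heatProfile t (rG x) / a` up to a constant. -/
def heatProfile (t r : ℝ) : ℝ := r / sinh r * t ^ (-(3 : ℝ) / 2) * exp (-(r ^ 2) / (4 * t))

lemma hasDerivAt_heatProfile (t : ℝ) {r : ℝ} (hr : r ≠ 0) :
    HasDerivAt (heatProfile t)
      (heatProfile t r * (1 / r - r / (2 * t) - cosh r / sinh r)) r := by
  have hs : sinh r ≠ 0 := sinh_ne_zero.2 hr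
  have hfrac := (hasDerivAt_id r).div (hasDerivAt_sinh r) hs
  have hgauss := (((hasDerivAt_id r).pow 2).neg.div_const (4 * t)).exp
  refine ((hfrac.mul_const (t ^ (-(3 : ℝ) / 2))).mul hgauss).congr_deriv ?_
  simp only [heatProfile, id, Pi.div_apply, Pi.pow_apply, Pi.neg_apply]
  field_simp
  ring

lemma heatK_eq_heatProfile (t : ℝ) {x : G} (hx : 0 < x.2.2) (hr : rG x ≠ 0) :
    heatK t x = (8 * π ^ ((3 : ℝ) / 2))⁻¹ * (x.2.2⁻¹ * heatProfile t (rG x)) := by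
  have hδ : √(deltaG x) = x.2.2⁻¹ := by rw [deltaG, sqrt_inv, sqrt_sq hx.le]
  rw [heatK, hδ, if_neg hr, heatProfile]
  ring

lemma hasDerivAt_rG {γ : ℝ → G} {c' s : ℝ} (hpos : 0 < (γ s).2.2) (hr : 0 < rG (γ s))
    (hc : HasDerivAt (fun s ↦ coshArg (γ s)) c' s) :
    HasDerivAt (fun s ↦ rG (γ s)) (c' / sinh (rG (γ s))) s := by
  have h1 : 1 < coshArg (γ s) := by rw [← cosh_rG hpos]; exact one_lt_cosh.2 hr.ne'
  refine ((hasDerivAt_arcosh h1).comp s hc).congr_deriv ?_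
  rw [← sinh_arcosh h1.le, inv_mul_eq_div]
  rfl

lemma hasDerivAt_heatK (t : ℝ) {γ : ℝ → G} {a' c' s : ℝ} (hpos : 0 < (γ s).2.2)
    (hr : 0 < rG (γ s)) (ha : HasDerivAt (fun s ↦ (γ s).2.2) a' s)
    (hc : HasDerivAt (fun s ↦ coshArg (γ s)) c' s) :
    HasDerivAt (fun s ↦ heatK t (γ s))
      (heatK t (γ s) * (-a' / (γ s).2.2 +
        (1 / rG (γ s) - rG (γ s) / (2 * t) - cosh (rG (γ s)) / sinh (rG (γ s))) *
          (c' / sinh (rG (γ s))))) s := by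
  have hrad := hasDerivAt_rG hpos hr hc
  have hprofile := (hasDerivAt_heatProfile t hr.ne').comp s hrad
  have hprod := ((ha.inv hpos.ne').mul hprofile).const_mul (8 * π ^ ((3 : ℝ) / 2))⁻¹
  have heq : (fun s ↦ heatK t (γ s)) =ᶠ[nhds s] fun s ↦
      (8 * π ^ ((3 : ℝ) / 2))⁻¹ * ((γ s).2.2⁻¹ * heatProfile t (rG (γ s))) := by
    filter_upwards [ha.continuousAt.eventually_const_lt hpos,
      hrad.continuousAt.eventually_const_lt hr] with s hpos hr
    exact heatK_eq_heatProfile t hpos hr.ne'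
  refine (hprod.congr_of_eventuallyEq heq).congr_deriv ?_
  rw [heatK_eq_heatProfile t hpos hr.ne']
  simp only [Function.comp, Pi.inv_apply]
  field_simp

-- Each `Xᵢ (heatK t)` is `heatK t` times `Xᵢ (-log a) + ψ Xᵢ r`, with `ψ` the logarithmic
-- derivative of the profile, and `sinh r • (X₀ r, X₁ r, X₂ r) = (a - cosh r, x₁, x₂)`.
lemma X0_heatK (t : ℝ) {x : G} (hx : 0 < x.2.2) (hr : 0 < rG x) :
    X0 (heatK t) x = heatK t x * (-1 +
      (1 / rG x - rG x / (2 * t) - cosh (rG x) / sinh (rG x)) *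
        ((x.2.2 - cosh (rG x)) / sinh (rG x))) := by
  have ha := hasDerivAt_id x.2.2
  have hc : HasDerivAt (fun s ↦ coshArg (x.1, x.2.1, s))
      ((x.2.2 - cosh (rG x)) / x.2.2) x.2.2 := by
    refine (((ha.add (ha.inv hx.ne')).add
      ((ha.inv hx.ne').mul_const (x.1 ^ 2 + x.2.1 ^ 2))).div_const 2).congr_deriv ?_
    rw [cosh_rG hx, coshArg, id]
    field_simp
    ring
  rw [X0, (hasDerivAt_heatK t (γ := fun s ↦ (x.1, x.2.1, s)) hx hr ha hc).deriv]
  field_simp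

lemma X1_heatK (t : ℝ) {x : G} (hx : 0 < x.2.2) (hr : 0 < rG x) :
    X1 (heatK t) x = heatK t x *
      ((1 / rG x - rG x / (2 * t) - cosh (rG x) / sinh (rG x)) * (x.1 / sinh (rG x))) := by
  have hc : HasDerivAt (fun s ↦ coshArg (s, x.2.1, x.2.2)) (x.1 / x.2.2) x.1 := by
    refine (((((hasDerivAt_id x.1).pow 2).add_const (x.2.1 ^ 2)).const_mul x.2.2⁻¹).const_add
      (x.2.2 + x.2.2⁻¹) |>.div_const 2).congr_deriv ?_
    simp only [id]
    field_simp
    ring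
  rw [X1, (hasDerivAt_heatK t (γ := fun s ↦ (s, x.2.1, x.2.2)) hx hr
    (hasDerivAt_const _ _) hc).deriv]
  field_simp
  ring

lemma X2_heatK (t : ℝ) {x : G} (hx : 0 < x.2.2) (hr : 0 < rG x) :
    X2 (heatK t) x = heatK t x *
      ((1 / rG x - rG x / (2 * t) - cosh (rG x) / sinh (rG x)) * (x.2.1 / sinh (rG x))) := by
  have hc : HasDerivAt (fun s ↦ coshArg (x.1, s, x.2.2)) (x.2.1 / x.2.2) x.2.1 := by
    refine (((((hasDerivAt_id x.2.1).pow 2).const_add (x.1 ^ 2)).const_mul x.2.2⁻¹).const_add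
      (x.2.2 + x.2.2⁻¹) |>.div_const 2).congr_deriv ?_
    simp only [id]
    field_simp
    ring
  rw [X2, (hasDerivAt_heatK t (γ := fun s ↦ (x.1, s, x.2.2)) hx hr
    (hasDerivAt_const _ _) hc).deriv]
  field_simp
  ring

lemma heatK_nonneg {t : ℝ} (ht : 0 ≤ t) {x : G} (hx : 0 < x.2.2) : 0 ≤ heatK t x := by
  have hfrac : 0 ≤ if rG x = 0 then 1 else rG x / sinh (rG x) := by
    have hr := rG_nonneg hx
    have := sinh_nonneg_iff.2 hr
    split_ifs <;> positivity
  rw [heatK]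
  positivity

lemma height_le_sqrt_two_mul_cosh_rG {x : G} (hx : 0 < x.2.2) :
    x.2.2 ≤ √(2 * x.2.2 * cosh (rG x)) := by
  refine le_sqrt_of_sq_le ?_
  rw [two_mul_mul_cosh_rG hx]
  linarith [sq_nonneg x.1, sq_nonneg x.2.1]

-- The terms that do not decay in `r` combine to `e₀ + coth r ∇r`, whose norm is only
-- `√(a² + |x|²) / sinh r`.
lemma gradHeatNorm_sq (t : ℝ) {x : G} (hx : 0 < x.2.2) (hr : 0 < rG x) :
    gradHeatNorm t x ^ 2 = heatK t x ^ 2 *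
      ((2 * x.2.2 * cosh (rG x) - 1) / sinh (rG x) ^ 2
        - 2 * (1 / rG x - rG x / (2 * t)) * (x.2.2 / sinh (rG x))
        + (1 / rG x - rG x / (2 * t)) ^ 2) := by
  have hs : sinh (rG x) ≠ 0 := sinh_ne_zero.2 hr.ne'
  have hunit := sinh_rG_sq hx
  have hcosh := cosh_sq (rG x)
  rw [gradHeatNorm, sq_sqrt (by positivity), X0_heatK t hx hr, X1_heatK t hx hr, X2_heatK t hx hr]
  generalize 1 / rG x - rG x / (2 * t) = m
  field_simp
  linear_combination heatK t x ^ 2 *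
    (-(m * sinh (rG x) - cosh (rG x)) ^ 2 * hunit - sinh (rG x) ^ 2 * hcosh)

lemma gradHeatNorm_le_heatK_mul {t : ℝ} (ht : 0 < t) {x : G} (hx : 0 < x.2.2) (hr : 0 < rG x) :
    gradHeatNorm t x ≤ heatK t x *
      (√(2 * x.2.2 * cosh (rG x)) / sinh (rG x) + (1 / rG x + rG x / (2 * t))) := by
  have : 0 < sinh (rG x) := sinh_pos_iff.2 hr
  set B := √(2 * x.2.2 * cosh (rG x))
  set m := 1 / rG x - rG x / (2 * t)
  set M := 1 / rG x + rG x / (2 * t)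
  have hBsq : B ^ 2 = 2 * x.2.2 * cosh (rG x) := sq_sqrt (by positivity)
  have hm : |m| ≤ M :=
    (abs_sub _ _).trans_eq (by rw [abs_of_pos (by positivity), abs_of_pos (by positivity)])
  have hdiag : (B ^ 2 - 1) / sinh (rG x) ^ 2 ≤ (B / sinh (rG x)) ^ 2 := by
    rw [div_pow]; gcongr; linarith
  have hcross : -(2 * m * (x.2.2 / sinh (rG x))) ≤ 2 * M * (B / sinh (rG x)) := by
    rw [← neg_mul, ← mul_neg]
    gcongr
    · exact (neg_le_abs m).trans hm
    · exact height_le_sqrt_two_mul_cosh_rG hx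
  refine (le_abs_self _).trans (abs_le_of_sq_le_sq ?_
    (mul_nonneg (heatK_nonneg ht.le hx) (by positivity)))
  rw [gradHeatNorm_sq t hx hr, ← hBsq, mul_pow]
  gcongr
  linarith [sq_le_sq' (neg_le_of_abs_le hm) (le_of_abs_le hm)]

/-- A bound, up to a constant, for `‖∇p_t‖` at a point of height `a` and at distance `r` from the
identity; it does not depend on `t`. -/
def gradBound (a r : ℝ) : ℝ :=
  a⁻¹ * (sinh r)⁻¹ * (√(2 * a * cosh r) / (r ^ 2 * sinh r) + 2 / r ^ 3)

lemma gradHeatNorm_le {t : ℝ} (ht : 0 < t) {x : G} (hx : 0 < x.2.2) (hr : 0 < rG x) :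
    gradHeatNorm t x ≤ 12 * gradBound x.2.2 (rG x) := by
  have hs : 0 < sinh (rG x) := sinh_pos_iff.2 hr
  set r := rG x with hrdef
  set τ := t ^ (-(3 : ℝ) / 2) * exp (-(r ^ 2) / (4 * t)) with hτ
  set B := √(2 * x.2.2 * cosh r)
  have hconst : (8 * π ^ ((3 : ℝ) / 2))⁻¹ ≤ 8⁻¹ := by
    have : 1 ≤ π ^ ((3 : ℝ) / 2) := one_le_rpow (by linarith [pi_gt_three]) (by norm_num)
    gcongr; linarith
  have hτ_le : τ ≤ 16 / r ^ 3 := rpow_neg_three_half_mul_exp_neg_sq_div_le ht hr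
  have hτ_div_le : τ * (r / (2 * t)) ≤ 168 / r ^ 4 :=
    calc τ * (r / (2 * t)) = r / 2 * (t ^ (-(5 : ℝ) / 2) * exp (-(r ^ 2) / (4 * t))) := by
          rw [show -(5 : ℝ) / 2 = -3 / 2 - 1 by norm_num, rpow_sub_one ht.ne', hτ]; ring
      _ ≤ r / 2 * (336 / r ^ 5) := by
          gcongr
          exact rpow_neg_five_half_mul_exp_neg_sq_div_le ht hr
      _ = 168 / r ^ 4 := by field_simp; norm_num
  calc gradHeatNorm t x ≤ heatK t x * (B / sinh r + (1 / r + r / (2 * t))) :=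
        gradHeatNorm_le_heatK_mul ht hx hr
    _ = (8 * π ^ ((3 : ℝ) / 2))⁻¹ * (x.2.2⁻¹ * (sinh r)⁻¹ *
          (τ * (r * (B / sinh r) + 1) + r * (τ * (r / (2 * t))))) := by
        rw [heatK_eq_heatProfile t hx hr.ne', heatProfile, hτ, ← hrdef]; field_simp; ring
    _ ≤ 8⁻¹ * (x.2.2⁻¹ * (sinh r)⁻¹ *
          (16 / r ^ 3 * (r * (B / sinh r) + 1) + r * (168 / r ^ 4))) := by gcongr
    _ = x.2.2⁻¹ * (sinh r)⁻¹ * (2 * (B / (r ^ 2 * sinh r)) + 23 / r ^ 3) := by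
        field_simp; ring
    _ ≤ x.2.2⁻¹ * (sinh r)⁻¹ * (12 * (B / (r ^ 2 * sinh r)) + 24 / r ^ 3) := by
        gcongr <;> norm_num
    _ = 12 * gradBound x.2.2 r := by rw [gradBound]; ring

/-! ### Comparison on small balls -/

lemma gradBound_nonneg {a r : ℝ} (ha : 0 ≤ a) (hr : 0 ≤ r) : 0 ≤ gradBound a r := by
  have := sinh_nonneg_iff.2 hr
  unfold gradBound; positivity

lemma gradBound_le_exp_mul_gradBound {a b r s h : ℝ} (ha : 0 < a) (hb : 0 < b) (hr : 0 < r)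
    (hh : 0 ≤ h) (hba : b ≤ exp h * a) (hab : a ≤ exp h * b) (hhs : h ≤ s)
    (hrs : r ≤ s + h) (hsr : s ≤ r + h) : gradBound b s ≤ 16 * exp (4 * h) * gradBound a r := by
  have hs : 0 < s := by linarith
  have hsinh_r : 0 < sinh r := sinh_pos_iff.2 hr
  have hsinh_s : 0 < sinh s := sinh_pos_iff.2 hs
  have hheight : b⁻¹ ≤ exp h * a⁻¹ := by
    rw [inv_le_iff_one_le_mul₀ hb, mul_right_comm, ← div_eq_mul_inv, one_le_div ha]; exact hab
  have hsinh : (sinh s)⁻¹ ≤ 2 * exp h * (sinh r)⁻¹ := by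
    rw [inv_le_iff_one_le_mul₀ hsinh_s, mul_right_comm, ← div_eq_mul_inv, one_le_div hsinh_r]
    exact (sinh_le_sinh.2 hrs).trans (sinh_add_le_two_mul_exp_mul_sinh hh hhs)
  have hinv : s⁻¹ ≤ 2 * r⁻¹ := by
    rw [inv_le_iff_one_le_mul₀ hs, mul_right_comm, ← div_eq_mul_inv, one_le_div hr]; linarith
  have hcosh : cosh s ≤ exp h * cosh r := by
    refine (cosh_le_cosh.2 ?_).trans (cosh_add_le_exp_mul_cosh r hh)
    rwa [abs_of_pos hs, abs_of_nonneg (by positivity)]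
  have hsqrt : √(2 * b * cosh s) ≤ exp h * √(2 * a * cosh r) := by
    calc √(2 * b * cosh s) ≤ √(2 * (exp h * a) * (exp h * cosh r)) := by gcongr
      _ = √(exp h ^ 2 * (2 * a * cosh r)) := by ring_nf
      _ = exp h * √(2 * a * cosh r) := by rw [sqrt_mul (sq_nonneg _), sqrt_sq (exp_pos h).le]
  calc gradBound b s
      = b⁻¹ * (sinh s)⁻¹ * (√(2 * b * cosh s) * (s⁻¹ ^ 2 * (sinh s)⁻¹) + 2 * s⁻¹ ^ 3) := by
        rw [gradBound]; field_simp
    _ ≤ exp h * a⁻¹ * (2 * exp h * (sinh r)⁻¹) * (exp h * √(2 * a * cosh r) *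
          ((2 * r⁻¹) ^ 2 * (2 * exp h * (sinh r)⁻¹)) + 2 * (2 * r⁻¹) ^ 3) := by gcongr
    _ = 2 * exp h ^ 2 * (a⁻¹ * (sinh r)⁻¹) *
          (8 * exp h ^ 2 * (√(2 * a * cosh r) / (r ^ 2 * sinh r)) + 8 * 1 * (2 / r ^ 3)) := by
        field_simp; ring
    _ ≤ 2 * exp h ^ 2 * (a⁻¹ * (sinh r)⁻¹) * (8 * exp h ^ 2 *
          (√(2 * a * cosh r) / (r ^ 2 * sinh r)) + 8 * exp h ^ 2 * (2 / r ^ 3)) := by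
        gcongr; exact one_le_pow₀ (one_le_exp hh)
    _ = 16 * exp (4 * h) * gradBound a r := by
        rw [gradBound, show exp (4 * h) = exp h ^ 4 by rw [← exp_nat_mul]; norm_num]; ring

lemma Gsup_le {r₁ : ℝ} {x : G} (hx : 0 < x.2.2) (hr₁ : 0 < r₁) (hxr : r₁ ≤ rG x) :
    Gsup r₁ x ≤ ENNReal.ofReal (192 * exp (2 * r₁) * gradBound x.2.2 (rG x)) := by
  refine iSup₂_le fun z ⟨hz, hxz⟩ ↦ iSup₂_le fun t ht ↦ ENNReal.ofReal_le_ofReal ?_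
  have hcomm := dG_comm hx hz
  have hrx : rG x ≤ rG z + dG x z := hcomm ▸ rG_le_rG_add_dG hz hx
  have hrz : 0 < rG z := by linarith [hxz, hr₁]
  calc gradHeatNorm t z ≤ 12 * gradBound z.2.2 (rG z) := gradHeatNorm_le ht hz hrz
    _ ≤ 12 * (16 * exp (4 * dG x z) * gradBound x.2.2 (rG x)) := by
        gcongr
        exact gradBound_le_exp_mul_gradBound hx hz (hr₁.trans_le hxr) (dG_nonneg hx hz)
          (height_le_exp_dG_mul_height hx hz) (hcomm ▸ height_le_exp_dG_mul_height hz hx)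
          (by linarith) hrx (rG_le_rG_add_dG hx hz)
    _ ≤ 12 * (16 * exp (2 * r₁) * gradBound x.2.2 (rG x)) := by
        have := gradBound_nonneg hx.le (rG_nonneg hx)
        gcongr 12 * (16 * exp ?_ * _)
        linarith
    _ = 192 * exp (2 * r₁) * gradBound x.2.2 (rG x) := by ring

/-! ### Integration in the coordinates `(log a, r)` -/

lemma lintegral_ρG {f : G → ℝ≥0∞} (hf : Measurable f) :
    ∫⁻ x, f x ∂ρG = ∫⁻ u, ∫⁻ p : ℝ × ℝ, f (p.1, p.2, exp u) := by
  have hdensity : Measurable fun x : G ↦ ENNReal.ofReal (if 0 < x.2.2 then x.2.2⁻¹ else 0) :=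
    (Measurable.ite (measurableSet_lt measurable_const (by fun_prop)) (by fun_prop)
      measurable_const).ennreal_ofReal
  have hslice (a : ℝ) :
      ∫⁻ p : ℝ × ℝ, ENNReal.ofReal (if 0 < a then a⁻¹ else 0) * f (p.1, p.2, a) =
        (Ioi 0).indicator
          (fun a ↦ ENNReal.ofReal a⁻¹ * ∫⁻ p : ℝ × ℝ, f (p.1, p.2, a)) a := by
    rw [lintegral_const_mul _ (by fun_prop)]
    by_cases ha : 0 < a <;> simp [ha]
  rw [lintegral_comp_exp (fun a ↦ ∫⁻ p : ℝ × ℝ, f (p.1, p.2, a)),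
    ← lintegral_indicator measurableSet_Ioi, ρG,
    lintegral_withDensity_eq_lintegral_mul _ hdensity hf,
    ← (volume_preserving_prodAssoc (α₁ := ℝ) (β₁ := ℝ) (γ₁ := ℝ)).lintegral_comp (hdensity.mul hf),
    Measure.volume_eq_prod, lintegral_prod_symm _ (by fun_prop)]
  exact lintegral_congr hslice

lemma coshArg_exp (x₁ x₂ u : ℝ) :
    coshArg (x₁, x₂, exp u) = cosh u + exp (-u) * (x₁ ^ 2 + x₂ ^ 2) / 2 := by
  rw [coshArg, cosh_eq, exp_neg]; ring

lemma cosh_rG_exp (x₁ x₂ u : ℝ) :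
    cosh (rG (x₁, x₂, exp u)) = cosh u + exp (-u) * (x₁ ^ 2 + x₂ ^ 2) / 2 :=
  (cosh_rG (exp_pos u)).trans (coshArg_exp x₁ x₂ u)

lemma rG_eq_rG_sqrt (x₁ x₂ a : ℝ) : rG (x₁, x₂, a) = rG (√(x₁ ^ 2 + x₂ ^ 2), 0, a) := by
  have : coshArg (x₁, x₂, a) = coshArg (√(x₁ ^ 2 + x₂ ^ 2), 0, a) := by
    simp only [coshArg]
    rw [sq_sqrt (by positivity)]
    ring
  rw [rG, rG, this]

lemma abs_lt_rG_exp {s : ℝ} (hs : 0 < s) (u : ℝ) : |u| < rG (s, 0, exp u) := by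
  rw [← abs_of_nonneg (rG_nonneg (exp_pos u) : 0 ≤ rG (s, 0, exp u)), ← cosh_lt_cosh,
    cosh_rG_exp]
  have : 0 < exp (-u) * (s ^ 2 + 0 ^ 2) / 2 := by positivity
  linarith

lemma hasDerivAt_rG_exp {s : ℝ} (hs : 0 < s) (u : ℝ) :
    HasDerivAt (fun s ↦ rG (s, 0, exp u)) (exp (-u) * s / sinh (rG (s, 0, exp u))) s := by
  refine hasDerivAt_rG (γ := fun s ↦ (s, 0, exp u)) (exp_pos u)
    ((abs_nonneg u).trans_lt (abs_lt_rG_exp hs u)) ?_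
  simp only [coshArg_exp]
  refine (((((hasDerivAt_id s).pow 2).add_const _).const_mul _).div_const 2
    |>.const_add _).congr_deriv ?_
  simp only [id]
  ring

lemma injOn_rG_exp (u : ℝ) : InjOn (fun s ↦ rG (s, 0, exp u)) (Ioi 0) := by
  intro s hs s' hs' h
  have hcosh := congrArg cosh h
  simp only [cosh_rG_exp] at hcosh
  have hsq : s ^ 2 = s' ^ 2 := mul_left_cancel₀ (exp_ne_zero (-u)) (by linarith)
  exact (pow_left_inj₀ (le_of_lt hs) (le_of_lt hs') two_ne_zero).1 hsq

lemma image_rG_exp_Ioi (u : ℝ) : (fun s ↦ rG (s, 0, exp u)) '' Ioi 0 = Ioi |u| := by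
  refine Subset.antisymm (image_subset_iff.2 fun s hs ↦ abs_lt_rG_exp hs u) fun r hr ↦ ?_
  have hr0 : 0 < r := (abs_nonneg u).trans_lt hr
  have hlt : 0 < 2 * exp u * (cosh r - cosh u) := by
    have : cosh u < cosh r := cosh_lt_cosh.2 (by rwa [abs_of_pos hr0])
    have := sub_pos.2 this
    positivity
  refine ⟨√(2 * exp u * (cosh r - cosh u)), sqrt_pos.2 hlt, ?_⟩
  have hcosh : coshArg (√(2 * exp u * (cosh r - cosh u)), 0, exp u) = cosh r := by
    rw [coshArg_exp, sq_sqrt hlt.le, exp_neg]; field_simp; ring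
  exact (congrArg arcosh hcosh).trans (arcosh_cosh hr0.le)

lemma lintegral_comp_rG_exp {g : ℝ → ℝ≥0∞} (hg : Measurable g) (u : ℝ) :
    ∫⁻ p : ℝ × ℝ, g (rG (p.1, p.2, exp u)) =
      ENNReal.ofReal (2 * π * exp u) * ∫⁻ r in Ioi |u|, ENNReal.ofReal (sinh r) * g r := by
  have hmeas : Measurable fun s ↦ g (rG (s, 0, exp u)) :=
    hg.comp (measurable_rG.comp (by fun_prop))
  have hderiv : ∀ s ∈ Ioi (0 : ℝ), ENNReal.ofReal s * g (rG (s, 0, exp u)) =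
      ENNReal.ofReal (exp u) * (ENNReal.ofReal |exp (-u) * s / sinh (rG (s, 0, exp u))| *
        (ENNReal.ofReal (sinh (rG (s, 0, exp u))) * g (rG (s, 0, exp u)))) := fun s hs ↦ by
    have hs : 0 < s := hs
    have hsinh : 0 < sinh (rG (s, 0, exp u)) :=
      sinh_pos_iff.2 ((abs_nonneg u).trans_lt (abs_lt_rG_exp hs u))
    rw [abs_of_pos (by positivity), ← mul_assoc, ← mul_assoc, ← ENNReal.ofReal_mul (exp_pos u).le,
      ← ENNReal.ofReal_mul (by positivity), exp_neg]
    congr 2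
    field_simp
  calc ∫⁻ p : ℝ × ℝ, g (rG (p.1, p.2, exp u))
      = ∫⁻ p : ℝ × ℝ, g (rG (√(p.1 ^ 2 + p.2 ^ 2), 0, exp u)) :=
        lintegral_congr fun p ↦ congrArg g (rG_eq_rG_sqrt p.1 p.2 (exp u))
    _ = ENNReal.ofReal (2 * π) * ∫⁻ s in Ioi 0, ENNReal.ofReal s * g (rG (s, 0, exp u)) :=
        lintegral_comp_sqrt_sq_add_sq hmeas
    _ = ENNReal.ofReal (2 * π) * (ENNReal.ofReal (exp u) *
          ∫⁻ s in Ioi 0, ENNReal.ofReal |exp (-u) * s / sinh (rG (s, 0, exp u))| *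
            (ENNReal.ofReal (sinh (rG (s, 0, exp u))) * g (rG (s, 0, exp u)))) := by
        rw [setLIntegral_congr_fun measurableSet_Ioi hderiv,
          lintegral_const_mul' _ _ ENNReal.ofReal_ne_top]
    _ = ENNReal.ofReal (2 * π * exp u) * ∫⁻ r in Ioi |u|, ENNReal.ofReal (sinh r) * g r := by
        rw [← mul_assoc, ← ENNReal.ofReal_mul (by positivity), ← image_rG_exp_Ioi,
          lintegral_image_eq_lintegral_abs_deriv_mul measurableSet_Ioi
            (fun s hs ↦ (hasDerivAt_rG_exp hs u).hasDerivWithinAt) (injOn_rG_exp u)]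

lemma lintegral_ρG_comp_rG {f : ℝ → ℝ → ℝ≥0∞} (hf : Measurable (Function.uncurry f)) :
    ∫⁻ x, f x.2.2 (rG x) ∂ρG = ENNReal.ofReal (2 * π) * ∫⁻ r in Ioi 0,
      ENNReal.ofReal (sinh r) * ∫⁻ u in Ioo (-r) r, ENNReal.ofReal (exp u) * f (exp u) r := by
  have hfrG : Measurable fun x : G ↦ f x.2.2 (rG x) :=
    hf.comp (Measurable.prodMk (by fun_prop) measurable_rG)
  have hfexp : Measurable fun p : ℝ × ℝ ↦ f (exp p.1) p.2 :=
    hf.comp (by fun_prop : Measurable fun p : ℝ × ℝ ↦ (exp p.1, p.2))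
  have hf₁ (u : ℝ) : Measurable (f (exp u)) := hfexp.comp measurable_prodMk_left
  calc ∫⁻ x, f x.2.2 (rG x) ∂ρG
      = ∫⁻ u, ENNReal.ofReal (2 * π) * ∫⁻ r in Ioi |u|,
          ENNReal.ofReal (sinh r) * (ENNReal.ofReal (exp u) * f (exp u) r) := by
        rw [lintegral_ρG hfrG]
        refine lintegral_congr fun u ↦ ?_
        rw [lintegral_comp_rG_exp (hf₁ u), ENNReal.ofReal_mul (by positivity), mul_assoc,
          ← lintegral_const_mul' _ _ ENNReal.ofReal_ne_top]
        simp only [mul_left_comm]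
    _ = ENNReal.ofReal (2 * π) * ∫⁻ r in Ioi 0, ∫⁻ u in Ioo (-r) r,
          ENNReal.ofReal (sinh r) * (ENNReal.ofReal (exp u) * f (exp u) r) := by
        rw [lintegral_const_mul' _ _ ENNReal.ofReal_ne_top, lintegral_setLIntegral_Ioi_abs_swap]
        simp only [Function.uncurry_def]
        fun_prop
    _ = _ := by simp only [lintegral_const_mul' _ _ ENNReal.ofReal_ne_top]

lemma setLIntegral_gradBound_exp_le {r : ℝ} (hr : 0 < r) :
    ENNReal.ofReal (sinh r) * ∫⁻ u in Ioo (-r) r,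
      ENNReal.ofReal (exp u) * ENNReal.ofReal (gradBound (exp u) r) ≤
        ENNReal.ofReal (8 * (r ^ 2)⁻¹) := by
  have hs : 0 < sinh r := sinh_pos_iff.2 hr
  have hmul (u : ℝ) : exp u * gradBound (exp u) r =
      (sinh r)⁻¹ * (√(2 * cosh r) / (r ^ 2 * sinh r) * exp (u / 2) + 2 / r ^ 3) := by
    have hsqrt : √(2 * exp u * cosh r) = √(2 * cosh r) * exp (u / 2) := by
      rw [mul_right_comm, sqrt_mul (by positivity), ← exp_half]
    rw [gradBound, hsqrt]; field_simp
  have hint : IntervalIntegrable (fun u ↦ exp u * gradBound (exp u) r) volume (-r) r := by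
    simp only [hmul]
    exact Continuous.intervalIntegrable (by fun_prop) _ _
  have hle : -r ≤ r := by linarith
  simp_rw [← ENNReal.ofReal_mul (exp_pos _).le]
  rw [setLIntegral_congr Ioo_ae_eq_Ioc, ← ofReal_integral_eq_lintegral_ofReal
    ((intervalIntegrable_iff_integrableOn_Ioc_of_le hle).1 hint)
    (ae_of_all _ fun u ↦ mul_nonneg (exp_pos _).le (gradBound_nonneg (exp_pos _).le hr.le)),
    ← intervalIntegral.integral_of_le hle, ← ENNReal.ofReal_mul hs.le]
  refine ENNReal.ofReal_le_ofReal ?_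
  have hexp : IntervalIntegrable (fun u ↦ √(2 * cosh r) / (r ^ 2 * sinh r) * exp (u / 2))
      volume (-r) r := Continuous.intervalIntegrable (by fun_prop) _ _
  simp only [hmul]
  rw [intervalIntegral.integral_const_mul, intervalIntegral.integral_add hexp (by simp),
    intervalIntegral.integral_const_mul, integral_exp_half, intervalIntegral.integral_const]
  calc sinh r * ((sinh r)⁻¹ * (√(2 * cosh r) / (r ^ 2 * sinh r) * (4 * sinh (r / 2)) +
        (r - -r) • (2 / r ^ 3)))
      = 4 / r ^ 2 * (√(2 * cosh r) * sinh (r / 2) / sinh r + 1) := by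
        rw [smul_eq_mul]; field_simp; ring
    _ ≤ 4 / r ^ 2 * (1 + 1) := by
        gcongr
        exact (div_le_one hs).2 (sqrt_two_mul_cosh_mul_sinh_half_le hr.le)
    _ = 8 * (r ^ 2)⁻¹ := by ring

lemma measurable_gradBound : Measurable (Function.uncurry gradBound) := by
  unfold gradBound Function.uncurry; fun_prop

lemma setLIntegral_gradBound_le {r₁ : ℝ} (hr₁ : 0 < r₁) :
    ∫⁻ x in {x | r₁ ≤ rG x}, ENNReal.ofReal (gradBound x.2.2 (rG x)) ∂ρG ≤
      ENNReal.ofReal (16 * π / r₁) := by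
  let f (a r : ℝ) : ℝ≥0∞ := (Ici r₁).indicator (fun r ↦ ENNReal.ofReal (gradBound a r)) r
  have hf : Measurable (Function.uncurry f) :=
    measurable_gradBound.ennreal_ofReal.indicator (measurable_snd measurableSet_Ici)
  calc ∫⁻ x in {x | r₁ ≤ rG x}, ENNReal.ofReal (gradBound x.2.2 (rG x)) ∂ρG
      = ∫⁻ x, f x.2.2 (rG x) ∂ρG :=
        (lintegral_indicator (measurable_rG measurableSet_Ici) _).symm
    _ = ENNReal.ofReal (2 * π) * ∫⁻ r in Ioi 0, ENNReal.ofReal (sinh r) *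
          ∫⁻ u in Ioo (-r) r, ENNReal.ofReal (exp u) * f (exp u) r := lintegral_ρG_comp_rG hf
    _ ≤ ENNReal.ofReal (2 * π) * ∫⁻ r in Ioi 0,
          (Ici r₁).indicator (fun r ↦ ENNReal.ofReal (8 * (r ^ 2)⁻¹)) r := by
        gcongr with r
        by_cases h : r ∈ Ici r₁
        · simpa only [f, indicator_of_mem h] using setLIntegral_gradBound_exp_le (hr₁.trans_le h)
        · simp [f, indicator_of_notMem h]
    _ ≤ ENNReal.ofReal (2 * π) * ∫⁻ r in Ici r₁, ENNReal.ofReal (8 * (r ^ 2)⁻¹) := by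
        gcongr ENNReal.ofReal (2 * π) * ?_
        rw [← lintegral_indicator measurableSet_Ici]
        exact setLIntegral_le_lintegral _ _
    _ = ENNReal.ofReal (16 * π / r₁) := by
        simp only [ENNReal.ofReal_mul (by norm_num : (0 : ℝ) ≤ 8)]
        rw [lintegral_const_mul' _ _ ENNReal.ofReal_ne_top, lintegral_Ici_inv_sq hr₁,
          ← ENNReal.ofReal_mul (by norm_num), ← ENNReal.ofReal_mul (by positivity)]
        congr 1
        ring

theorem integral_Gsup_general : ∃ C > (0 : ℝ), ∀ r₁ > (0 : ℝ),
    ∫⁻ x in {x : G | 0 < x.2.2 ∧ r₁ ≤ rG x}, Gsup r₁ x ∂ρG ≤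
      ENNReal.ofReal (C * exp (2 * r₁) / r₁) := by
  refine ⟨192 * (16 * π), by positivity, fun r₁ hr₁ ↦ ?_⟩
  have hset : MeasurableSet {x : G | 0 < x.2.2 ∧ r₁ ≤ rG x} :=
    (measurableSet_lt measurable_const (by fun_prop : Measurable fun x : G ↦ x.2.2)).inter
      (measurableSet_le measurable_const measurable_rG)
  have hconst : 0 ≤ 192 * exp (2 * r₁) := by positivity
  calc ∫⁻ x in {x : G | 0 < x.2.2 ∧ r₁ ≤ rG x}, Gsup r₁ x ∂ρG
      ≤ ∫⁻ x in {x : G | 0 < x.2.2 ∧ r₁ ≤ rG x},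
          ENNReal.ofReal (192 * exp (2 * r₁)) * ENNReal.ofReal (gradBound x.2.2 (rG x)) ∂ρG :=
        setLIntegral_mono' hset fun x hx ↦
          (Gsup_le hx.1 hr₁ hx.2).trans_eq (ENNReal.ofReal_mul hconst)
    _ = ENNReal.ofReal (192 * exp (2 * r₁)) * ∫⁻ x in {x : G | 0 < x.2.2 ∧ r₁ ≤ rG x},
          ENNReal.ofReal (gradBound x.2.2 (rG x)) ∂ρG :=
        lintegral_const_mul' _ _ ENNReal.ofReal_ne_top
    _ ≤ ENNReal.ofReal (192 * exp (2 * r₁)) * ENNReal.ofReal (16 * π / r₁) := by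
        gcongr
        exact (lintegral_mono_set fun x hx ↦ hx.2).trans (setLIntegral_gradBound_le hr₁)
    _ = ENNReal.ofReal (192 * (16 * π) * exp (2 * r₁) / r₁) := by
        rw [← ENNReal.ofReal_mul hconst]
        ring_nf

theorem integral_Gsup :
    ∀ K > (0 : ℝ), ∃ C > (0 : ℝ), ∀ r1 : ℝ, 0 < r1 → r1 ≤ K →
      ∫⁻ x in {x : G | 0 < x.2.2 ∧ r1 ≤ rG x}, Gsup r1 x ∂ρG ≤ ENNReal.ofReal (C / r1) := by
  obtain ⟨C, hC, h⟩ := integral_Gsup_general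
  refine fun K _ ↦ ⟨C * exp (2 * K), by positivity, fun r1 hr1 hr1K ↦ (h r1 hr1).trans ?_⟩
  gcongr
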